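/- For every solution of the backward Ricci flow system of class U3I0 (case (i)) with λ₂ ≥ λ₃, for all t ∈ [0,T): B(t) = (λ₄/(2A(t)D(t)))·(λ₁(λ₂−λ₃) + √(λ₁²(λ₂−λ₃)² + 4A(t)²λ₂λ₃)) and C(t) = (λ₄/(2A(t)D(t)))·(λ₁(λ₃−λ₂) + √(λ₁²(λ₂−λ₃)² + 4A(t)²λ₂λ₃)). -/

import Mathlib

open Real Set ENNReal

/-- The time domain `[0, T)` where `T ∈ (0, ∞]` is an extended nonnegative real. -/
def flowDomain (T : ℝ≥0∞) : Set ℝ := {t : ℝ | 0 ≤ t ∧ ENNReal.ofReal t < T}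

/-
The system has two first integrals, `B C D ^ 2` and `A D (B - C)`. Through
`(B + C) ^ 2 = (B - C) ^ 2 + 4 B C` they determine `A D (B + C)` up to a sign, which positivity
fixes. The sum and the difference of `B` and `C` then give each of them.
-/

section

variable {𝕜 E : Type*} [RCLike 𝕜] [NormedAddCommGroup E] [NormedSpace 𝕜 E]

theorem eq_of_hasDerivWithinAt_zero {f : 𝕜 → E} {s : Set 𝕜} {x y : 𝕜} (hs : Convex ℝ s)
    (hf : ∀ z ∈ s, HasDerivWithinAt f 0 s z) (hx : x ∈ s) (hy : y ∈ s) : f x = f y := by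
  have h : ‖f x - f y‖ ≤ 0 * ‖x - y‖ :=
    hs.norm_image_sub_le_of_norm_hasDerivWithin_le hf (fun _ _ ↦ norm_zero.le) hy hx
  rwa [zero_mul, norm_le_zero_iff, sub_eq_zero] at h

end

theorem zero_mem_flowDomain {T : ℝ≥0∞} (hT : 0 < T) : 0 ∈ flowDomain T :=
  ⟨le_rfl, by rwa [ENNReal.ofReal_zero]⟩

theorem ordConnected_flowDomain (T : ℝ≥0∞) : (flowDomain T).OrdConnected :=
  ⟨fun _ hx _ hy _ hz ↦ ⟨hx.1.trans hz.1, (ENNReal.ofReal_le_ofReal hz.2).trans_lt hy.2⟩⟩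

/-- A positive solution, on a set `S` of times, of the backward Ricci flow system of class `U3I0`,
case (i), whose metric coefficients are `A`, `B`, `C`, `D`. Derivatives are taken within `S`, hence
are one-sided at an endpoint belonging to `S`. -/
structure IsBackwardRicciFlowOn (A B C D : ℝ → ℝ) (S : Set ℝ) : Prop where
  pos : ∀ t ∈ S, 0 < A t ∧ 0 < B t ∧ 0 < C t ∧ 0 < D t
  hasDerivWithinAt_A : ∀ t ∈ S, HasDerivWithinAt A (-(B t / C t) - C t / B t - 2) S t
  hasDerivWithinAt_B : ∀ t ∈ S,
    HasDerivWithinAt B (-(C t / A t) - D t / C t + B t ^ 2 / (A t * C t)) S t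
  hasDerivWithinAt_C : ∀ t ∈ S,
    HasDerivWithinAt C (-(B t / A t) - D t / B t + C t ^ 2 / (A t * B t)) S t
  hasDerivWithinAt_D : ∀ t ∈ S, HasDerivWithinAt D (D t ^ 2 / (B t * C t)) S t

namespace IsBackwardRicciFlowOn

variable {A B C D : ℝ → ℝ} {S : Set ℝ} {t t₀ : ℝ}

theorem hasDerivWithinAt_B_mul_C_mul_D_sq (h : IsBackwardRicciFlowOn A B C D S) (ht : t ∈ S) :
    HasDerivWithinAt (fun s ↦ B s * C s * D s ^ 2) 0 S t := by
  obtain ⟨hA, hB, hC, -⟩ := h.pos t ht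
  refine (((h.hasDerivWithinAt_B t ht).fun_mul (h.hasDerivWithinAt_C t ht)).fun_mul
    ((h.hasDerivWithinAt_D t ht).fun_pow 2)).congr_deriv ?_
  field_simp
  push_cast
  ring

theorem hasDerivWithinAt_A_mul_D_mul_B_sub_C (h : IsBackwardRicciFlowOn A B C D S) (ht : t ∈ S) :
    HasDerivWithinAt (fun s ↦ A s * D s * (B s - C s)) 0 S t := by
  obtain ⟨hA, hB, hC, -⟩ := h.pos t ht
  refine (((h.hasDerivWithinAt_A t ht).fun_mul (h.hasDerivWithinAt_D t ht)).fun_mul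
    ((h.hasDerivWithinAt_B t ht).fun_sub (h.hasDerivWithinAt_C t ht))).congr_deriv ?_
  field_simp
  ring

theorem B_mul_C_mul_D_sq_eq (h : IsBackwardRicciFlowOn A B C D S) (hS : S.OrdConnected)
    (ht : t ∈ S) (ht₀ : t₀ ∈ S) : B t * C t * D t ^ 2 = B t₀ * C t₀ * D t₀ ^ 2 :=
  eq_of_hasDerivWithinAt_zero hS.convex (fun _ ↦ h.hasDerivWithinAt_B_mul_C_mul_D_sq) ht ht₀

theorem A_mul_D_mul_B_sub_C_eq (h : IsBackwardRicciFlowOn A B C D S) (hS : S.OrdConnected)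
    (ht : t ∈ S) (ht₀ : t₀ ∈ S) : A t * D t * (B t - C t) = A t₀ * D t₀ * (B t₀ - C t₀) :=
  eq_of_hasDerivWithinAt_zero hS.convex (fun _ ↦ h.hasDerivWithinAt_A_mul_D_mul_B_sub_C) ht ht₀

theorem A_mul_D_mul_B_add_C_eq (h : IsBackwardRicciFlowOn A B C D S) (hS : S.OrdConnected)
    (ht : t ∈ S) (ht₀ : t₀ ∈ S) :
    A t * D t * (B t + C t) =
      D t₀ * √(A t₀ ^ 2 * (B t₀ - C t₀) ^ 2 + 4 * A t ^ 2 * B t₀ * C t₀) := by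
  obtain ⟨hA, hB, hC, hD⟩ := h.pos t ht
  obtain ⟨-, -, -, hD₀⟩ := h.pos t₀ ht₀
  have hsq : (A t * D t * (B t + C t)) ^ 2 =
      D t₀ ^ 2 * (A t₀ ^ 2 * (B t₀ - C t₀) ^ 2 + 4 * A t ^ 2 * B t₀ * C t₀) :=
    calc (A t * D t * (B t + C t)) ^ 2
        = (A t * D t * (B t - C t)) ^ 2 + 4 * A t ^ 2 * (B t * C t * D t ^ 2) := by ring
      _ = (A t₀ * D t₀ * (B t₀ - C t₀)) ^ 2 + 4 * A t ^ 2 * (B t₀ * C t₀ * D t₀ ^ 2) := by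
        rw [h.A_mul_D_mul_B_sub_C_eq hS ht ht₀, h.B_mul_C_mul_D_sq_eq hS ht ht₀]
      _ = _ := by ring
  rw [← Real.sqrt_sq (by positivity : 0 ≤ A t * D t * (B t + C t)), hsq,
    Real.sqrt_mul (sq_nonneg _), Real.sqrt_sq hD₀.le]

end IsBackwardRicciFlowOn

theorem stmt10_general {A B C D : ℝ → ℝ} {S : Set ℝ} {t t₀ : ℝ}
    (h : IsBackwardRicciFlowOn A B C D S) (hS : S.OrdConnected) (ht : t ∈ S) (ht₀ : t₀ ∈ S) :
    B t = D t₀ / (2 * A t * D t) *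
      (A t₀ * (B t₀ - C t₀) +
        √(A t₀ ^ 2 * (B t₀ - C t₀) ^ 2 + 4 * A t ^ 2 * B t₀ * C t₀)) ∧
    C t = D t₀ / (2 * A t * D t) *
      (A t₀ * (C t₀ - B t₀) +
        √(A t₀ ^ 2 * (B t₀ - C t₀) ^ 2 + 4 * A t ^ 2 * B t₀ * C t₀)) := by
  obtain ⟨hA, -, -, hD⟩ := h.pos t ht
  have hsub := h.A_mul_D_mul_B_sub_C_eq hS ht ht₀
  have hadd := h.A_mul_D_mul_B_add_C_eq hS ht ht₀
  constructor <;> rw [div_mul_eq_mul_div] <;> refine eq_div_of_mul_eq (by positivity) ?_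
  · linear_combination hadd + hsub
  · linear_combination hadd - hsub

/-- For every solution of the backward Ricci flow system of class `U3I0`, case (i), with
`λ₂ ≥ λ₃`, for all `t ∈ [0,T)`:
`B(t) = (λ₄/(2AD))·(λ₁(λ₂−λ₃) + √(λ₁²(λ₂−λ₃)² + 4A²λ₂λ₃))` and
`C(t) = (λ₄/(2AD))·(λ₁(λ₃−λ₂) + √(λ₁²(λ₂−λ₃)² + 4A²λ₂λ₃))`. -/
theorem stmt10 (T : ℝ≥0∞) (hT : 0 < T)
    (lam1 lam2 lam3 lam4 : ℝ)
    (hlam1 : 0 < lam1) (hlam2 : 0 < lam2) (hlam3 : 0 < lam3) (hlam4 : 0 < lam4)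
    (hle : lam3 ≤ lam2)
    (A B C D : ℝ → ℝ)
    (hpos : ∀ t ∈ flowDomain T, 0 < A t ∧ 0 < B t ∧ 0 < C t ∧ 0 < D t)
    (hA : ∀ t ∈ flowDomain T,
      HasDerivWithinAt A (-(B t / C t) - C t / B t - 2) (flowDomain T) t)
    (hB : ∀ t ∈ flowDomain T,
      HasDerivWithinAt B (-(C t / A t) - D t / C t + B t ^ 2 / (A t * C t)) (flowDomain T) t)
    (hC : ∀ t ∈ flowDomain T,
      HasDerivWithinAt C (-(B t / A t) - D t / B t + C t ^ 2 / (A t * B t)) (flowDomain T) t)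
    (hD : ∀ t ∈ flowDomain T,
      HasDerivWithinAt D (D t ^ 2 / (B t * C t)) (flowDomain T) t)
    (hA0 : A 0 = lam1) (hB0 : B 0 = lam2) (hC0 : C 0 = lam3) (hD0 : D 0 = lam4) :
    ∀ t ∈ flowDomain T,
      B t = lam4 / (2 * A t * D t) *
        (lam1 * (lam2 - lam3) +
          Real.sqrt (lam1 ^ 2 * (lam2 - lam3) ^ 2 + 4 * A t ^ 2 * lam2 * lam3)) ∧
      C t = lam4 / (2 * A t * D t) *
        (lam1 * (lam3 - lam2) +
          Real.sqrt (lam1 ^ 2 * (lam2 - lam3) ^ 2 + 4 * A t ^ 2 * lam2 * lam3)) := by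
  subst hA0 hB0 hC0 hD0
  exact fun t ht ↦ stmt10_general ⟨hpos, hA, hB, hC, hD⟩ (ordConnected_flowDomain T) ht
    (zero_mem_flowDomain hT)
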